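/- Let n be a positive integer, let σ be a decorated permutation of order n, and let ρ : ℤ → ℤ be any function. Consider the set S of pairs ((a, b), (c, d)) of pairs of integers with 1 ≤ a ≤ n, a < b < a + n, 1 ≤ c ≤ n, c < d < c + n, such that (a b) is an allowed boundary transposition for σ, (c d) is an allowed boundary transposition for σ ∘ t_{a,b}, and σ ∘ t_{a,b} ∘ t_{c,d} = ρ. Then the cardinality of S is either 0 or 2. (Hence every codimension-2 boundary of a positroid cell is reached by exactly two chains of boundary transpositions, which is the mod-2 statement that the boundary operator squares to zero.) -/

import Mathlib

/-- A decorated permutation of order `n`: a bijection `σ : ℤ → ℤ` with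
`σ (i + n) = σ i + n` and `i ≤ σ i ≤ i + n` for all `i`. -/
def IsDecoratedPerm (n : ℤ) (σ : ℤ → ℤ) : Prop :=
  Function.Bijective σ ∧ (∀ i : ℤ, σ (i + n) = σ i + n) ∧ ∀ i : ℤ, i ≤ σ i ∧ σ i ≤ i + n

/-- The affine transposition `t_{a,b}`: swaps `a + m*n` and `b + m*n` for every `m : ℤ`
and fixes all integers not congruent to `a` or `b` modulo `n`. -/
def affT (n a b : ℤ) (i : ℤ) : ℤ :=
  if (i - a) % n = 0 then i + (b - a)
  else if (i - b) % n = 0 then i - (b - a)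
  else i

/-- `(a b)` is an allowed boundary transposition for `σ`: `a < b < a + n`,
`b ≤ σ a < σ b ≤ a + n`, and there is no `q` with `a < q < b` and `σ a < σ q < σ b`. -/
def AllowedBT (n : ℤ) (σ : ℤ → ℤ) (a b : ℤ) : Prop :=
  a < b ∧ b < a + n ∧ b ≤ σ a ∧ σ a < σ b ∧ σ b ≤ a + n ∧
    ¬ ∃ q : ℤ, a < q ∧ q < b ∧ σ a < σ q ∧ σ q < σ b

/-!
A chain from `σ` to `ρ` is determined by its middle term, so the middle terms are counted instead.
If the two transpositions of a chain are disjoint modulo `n`, they commute, both orders are allowed,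
and no other middle term exists. Otherwise `ρ` is `σ` times a 3-cycle of classes `x < y < z < x + n`
and the middle term is `σ` times one of the three transpositions of these classes. Up to the
reflection `(i, j) ↦ (-i, n - j)` of graphs, the chain through `t_{x,y}` is allowed exactly when the
L-shaped region `(x, y) × (σ x, σ y) ∪ (y, z) × (σ x, σ z)` misses the graph of `σ`, together with
some bounds; under the same condition the chain through `t_{y,z}` is allowed when `σ y < σ z` and
the chain through `t_{x,z}` when `σ z < σ y`. So there are always exactly two.
-/

section

variable {n : ℤ} {f g h : ℤ → ℤ} {a b c d i j k u v x y z : ℤ}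

theorem not_modEq_of_lt_of_lt_add (hij : i < j) (hji : j < i + n) :
    ¬ i ≡ j [ZMOD n] := fun hmod ↦ by
  have := Int.le_of_dvd (by omega) hmod.dvd
  omega

theorem not_modEq_of_ne_of_mem_Ico (hi : i ∈ Set.Ico x (x + n)) (hj : j ∈ Set.Ico x (x + n))
    (hij : i ≠ j) : ¬ i ≡ j [ZMOD n] := by
  obtain ⟨hxi, hix⟩ := hi
  obtain ⟨hxj, hjx⟩ := hj
  rcases lt_or_gt_of_ne hij with hlt | hgt
  · exact not_modEq_of_lt_of_lt_add hlt (by omega)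
  · exact Int.modEq_comm.not.1 (not_modEq_of_lt_of_lt_add hgt (by omega))

theorem pairwise_not_modEq_of_lt (hxy : x < y) (hyz : y < z) (hzx : z < x + n) :
    ¬ x ≡ y [ZMOD n] ∧ ¬ x ≡ z [ZMOD n] ∧ ¬ y ≡ z [ZMOD n] :=
  ⟨not_modEq_of_lt_of_lt_add hxy (by omega), not_modEq_of_lt_of_lt_add (hxy.trans hyz) hzx,
    not_modEq_of_lt_of_lt_add hyz (by omega)⟩

/-! ### Affine permutations -/

/-- Membership in the extended affine symmetric group of period `n`. Surjectivity is automatic for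
`n ≠ 0`, so only injectivity is recorded. -/
structure IsAffinePerm (n : ℤ) (f : ℤ → ℤ) : Prop where
  injective : Function.Injective f
  map_add_period : ∀ i, f (i + n) = f i + n

theorem IsDecoratedPerm.isAffinePerm (hf : IsDecoratedPerm n f) : IsAffinePerm n f :=
  ⟨hf.1.injective, hf.2.1⟩

namespace IsAffinePerm

theorem comp (hf : IsAffinePerm n f) (hg : IsAffinePerm n g) : IsAffinePerm n (f ∘ g) :=
  ⟨hf.injective.comp hg.injective, fun i ↦ by
    simp only [Function.comp_apply, hg.map_add_period, hf.map_add_period]⟩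

theorem map_add_mul (hf : IsAffinePerm n f) (i k : ℤ) : f (i + n * k) = f i + n * k := by
  simpa [mul_comm] using
    AddConstMapClass.map_add_zsmul (⟨f, hf.map_add_period⟩ : AddConstMap ℤ ℤ n n) i k

theorem modEq_iff (hf : IsAffinePerm n f) : f i ≡ f j [ZMOD n] ↔ i ≡ j [ZMOD n] := by
  simp only [Int.modEq_iff_add_fac, ← hf.map_add_mul, hf.injective.eq_iff]

end IsAffinePerm

/-! ### Affine transpositions -/

theorem affT_apply (n a b i : ℤ) : affT n a b i =
    if i ≡ a [ZMOD n] then i + (b - a) else if i ≡ b [ZMOD n] then i - (b - a) else i := by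
  simp only [affT, Int.ModEq, Int.emod_eq_emod_iff_emod_sub_eq_zero]

@[simp]
theorem affT_left (n a b : ℤ) : affT n a b a = b := by
  simp [affT_apply]

theorem affT_right (hab : ¬ a ≡ b [ZMOD n]) : affT n a b b = a := by
  simp [affT_apply, Int.modEq_comm.not.1 hab]

theorem affT_of_not_modEq (hia : ¬ i ≡ a [ZMOD n]) (hib : ¬ i ≡ b [ZMOD n]) :
    affT n a b i = i := by
  rw [affT_apply, if_neg hia, if_neg hib]

theorem affT_comm (hab : ¬ a ≡ b [ZMOD n]) : affT n a b = affT n b a := by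
  funext i
  simp only [affT_apply]
  grind [Int.ModEq]

theorem affT_add_mul (n a b k : ℤ) : affT n (a + n * k) (b + n * k) = affT n a b := by
  funext i
  simp only [affT_apply, Int.ModEq, Int.add_mul_emod_self_left, add_sub_add_right_eq_sub]
  congr

theorem affT_involutive (hab : ¬ a ≡ b [ZMOD n]) : Function.Involutive (affT n a b) := fun i ↦ by
  have hleft (hi : i ≡ a [ZMOD n]) : i + (b - a) ≡ b [ZMOD n] := by
    simpa using hi.add_right (b - a)
  have hright (hi : i ≡ b [ZMOD n]) : i - (b - a) ≡ a [ZMOD n] := by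
    simpa using hi.sub_right (b - a)
  simp only [affT_apply]
  grind [Int.ModEq]

theorem isAffinePerm_affT (hab : ¬ a ≡ b [ZMOD n]) : IsAffinePerm n (affT n a b) :=
  ⟨(affT_involutive hab).injective, fun i ↦ by
    simp only [affT_apply, Int.ModEq, Int.add_emod_right]
    grind⟩

theorem IsAffinePerm.comp_affT (hf : IsAffinePerm n f) (a b : ℤ) :
    f ∘ affT n a b = affT n (f a) (f b) ∘ f := by
  funext i
  simp only [Function.comp_apply, affT_apply, hf.modEq_iff]
  split_ifs with hia hib
  · obtain ⟨k, rfl⟩ := Int.modEq_iff_add_fac.1 hia.symm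
    rw [show a + n * k + (b - a) = b + n * k by ring, hf.map_add_mul, hf.map_add_mul]
    ring
  · obtain ⟨k, rfl⟩ := Int.modEq_iff_add_fac.1 hib.symm
    rw [show b + n * k - (b - a) = a + n * k by ring, hf.map_add_mul, hf.map_add_mul]
    ring
  · rfl

theorem affT_comp_affT_comm (hac : ¬ a ≡ c [ZMOD n]) (had : ¬ a ≡ d [ZMOD n])
    (hbc : ¬ b ≡ c [ZMOD n]) (hbd : ¬ b ≡ d [ZMOD n]) (hcd : ¬ c ≡ d [ZMOD n]) :
    affT n c d ∘ affT n a b = affT n a b ∘ affT n c d := by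
  rw [(isAffinePerm_affT hcd).comp_affT, affT_of_not_modEq hac had, affT_of_not_modEq hbc hbd]

theorem affT_braid_right (hij : ¬ i ≡ j [ZMOD n]) (hik : ¬ i ≡ k [ZMOD n])
    (hjk : ¬ j ≡ k [ZMOD n]) : affT n j k ∘ affT n i k = affT n i j ∘ affT n j k := by
  rw [(isAffinePerm_affT hjk).comp_affT, affT_of_not_modEq hij hik, affT_right hjk]

theorem affT_braid_left (hij : ¬ i ≡ j [ZMOD n]) (hik : ¬ i ≡ k [ZMOD n])
    (hjk : ¬ j ≡ k [ZMOD n]) : affT n i k ∘ affT n i j = affT n i j ∘ affT n j k := by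
  rw [(isAffinePerm_affT hij).comp_affT, affT_right hij,
    affT_of_not_modEq (Int.modEq_comm.not.1 hik) (Int.modEq_comm.not.1 hjk)]

theorem affT_eq_affT_of_apply_eq (hab : ¬ a ≡ b [ZMOD n]) (h : affT n a b i = j) (hij : i ≠ j) :
    affT n a b = affT n i j := by
  rw [affT_apply] at h
  split_ifs at h with hia hib
  · obtain ⟨k, rfl⟩ := Int.modEq_iff_add_fac.1 hia.symm
    rw [← h, show a + n * k + (b - a) = b + n * k by ring, affT_add_mul]
  · obtain ⟨k, rfl⟩ := Int.modEq_iff_add_fac.1 hib.symm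
    rw [← h, show b + n * k - (b - a) = a + n * k by ring, affT_add_mul, affT_comm hab]
  · exact absurd h hij

theorem modEq_of_lt_affT (hab : a < b) (hi : i < affT n a b i) : i ≡ a [ZMOD n] := by
  rw [affT_apply] at hi
  split_ifs at hi with hia
  · exact hia
  all_goals omega

/-! ### Empty rectangles -/

/-- The open rectangle `(a, b) × (u, v)` contains no point of the graph of `f`. -/
def GraphMisses (f : ℤ → ℤ) (a b u v : ℤ) : Prop :=
  ∀ q ∈ Set.Ioo a b, f q ∉ Set.Ioo u v

theorem graphMisses_split_left (hax : a < x) (hxb : x < b) :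
    GraphMisses f a b u v ↔
      GraphMisses f a x u v ∧ GraphMisses f x b u v ∧ f x ∉ Set.Ioo u v := by
  have (q : ℤ) : q < x ∨ x < q ∨ q = x := by omega
  simp only [GraphMisses, Set.mem_Ioo]
  grind

theorem graphMisses_split_right (hf : f.Injective) (hx : x ∉ Set.Ioo a b) (hux : u < f x)
    (hxv : f x < v) :
    GraphMisses f a b u v ↔ GraphMisses f a b u (f x) ∧ GraphMisses f a b (f x) v := by
  have hne (q : ℤ) (hq : q ∈ Set.Ioo a b) : f q ≠ f x := fun heq ↦ hx (hf heq ▸ hq)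
  simp only [GraphMisses, Set.mem_Ioo] at hne ⊢
  grind

theorem graphMisses_comp_affT_iff (ha : a ∈ Set.Ico x (x + n)) (hb : b ∈ Set.Ico x (x + n))
    (hxc : x ≤ c) (hdx : d ≤ x + n) (hac : a ∉ Set.Ioo c d) (hbc : b ∉ Set.Ioo c d) :
    GraphMisses (f ∘ affT n a b) c d u v ↔ GraphMisses f c d u v := by
  refine forall₂_congr fun q hq ↦ ?_
  have hqx : q ∈ Set.Ico x (x + n) := ⟨hxc.trans hq.1.le, hq.2.trans_le hdx⟩
  rw [Function.comp_apply,
    affT_of_not_modEq (not_modEq_of_ne_of_mem_Ico hqx ha fun h ↦ hac (h ▸ hq))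
      (not_modEq_of_ne_of_mem_Ico hqx hb fun h ↦ hbc (h ▸ hq))]

/-! ### Boundary transpositions -/

theorem allowedBT_iff : AllowedBT n f a b ↔
    a < b ∧ b < a + n ∧ b ≤ f a ∧ f a < f b ∧ f b ≤ a + n ∧ GraphMisses f a b (f a) (f b) := by
  simp only [AllowedBT, GraphMisses, Set.mem_Ioo, not_exists, not_and, and_imp]

namespace AllowedBT

theorem left_lt_right (h : AllowedBT n f a b) : a < b := h.1

theorem right_lt_add (h : AllowedBT n f a b) : b < a + n := h.2.1

theorem apply_lt_apply (h : AllowedBT n f a b) : f a < f b := h.2.2.2.1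

theorem not_modEq (h : AllowedBT n f a b) : ¬ a ≡ b [ZMOD n] :=
  not_modEq_of_lt_of_lt_add h.left_lt_right h.right_lt_add

theorem not_between (h : AllowedBT n f a b) {q : ℤ} (haq : a < q) (hqb : q < b)
    (hq : f a < f q) : ¬ f q < f b :=
  fun hq' ↦ h.2.2.2.2.2 ⟨q, haq, hqb, hq, hq'⟩

theorem isAffinePerm_comp (h : AllowedBT n f a b) (hf : IsAffinePerm n f) :
    IsAffinePerm n (f ∘ affT n a b) :=
  hf.comp (isAffinePerm_affT h.not_modEq)

theorem add_mul (h : AllowedBT n f a b) (hf : IsAffinePerm n f) (k : ℤ) :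
    AllowedBT n f (a + n * k) (b + n * k) := by
  obtain ⟨hab, _, hbf, hlt, hfa, -⟩ := id h
  refine ⟨by omega, by omega, ?_, ?_, ?_, ?_⟩
  iterate 3 simp only [hf.map_add_mul]; omega
  rintro ⟨q, haq, hqb, hq, hq'⟩
  obtain ⟨q, rfl⟩ : ∃ p, q = p + n * k := ⟨q - n * k, by ring⟩
  simp only [hf.map_add_mul] at hq hq'
  exact h.not_between (by omega) (by omega) (by omega : f a < f q) (by omega)

theorem exists_of_modEq_left (h : AllowedBT n f a b) (hf : IsAffinePerm n f)
    (hi : i ≡ a [ZMOD n]) :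
    ∃ j, j ≡ b [ZMOD n] ∧ AllowedBT n f i j ∧ affT n i j = affT n a b := by
  obtain ⟨k, rfl⟩ := Int.modEq_iff_add_fac.1 hi.symm
  exact ⟨b + n * k, by simp [Int.ModEq], h.add_mul hf k, affT_add_mul n a b k⟩

theorem exists_of_modEq_right (h : AllowedBT n f a b) (hf : IsAffinePerm n f)
    (hj : j ≡ b [ZMOD n]) :
    ∃ i, i ≡ a [ZMOD n] ∧ AllowedBT n f i j ∧ affT n i j = affT n a b := by
  obtain ⟨k, rfl⟩ := Int.modEq_iff_add_fac.1 hj.symm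
  exact ⟨a + n * k, by simp [Int.ModEq], h.add_mul hf k, affT_add_mul n a b k⟩

end AllowedBT

/-- The boundary transposition `(a b)` followed by the boundary transposition `(c d)` is a chain of
two codimension-one degenerations starting at `f`. -/
def AllowedChain (n : ℤ) (f : ℤ → ℤ) (a b c d : ℤ) : Prop :=
  AllowedBT n f a b ∧ AllowedBT n (f ∘ affT n a b) c d

theorem allowedChain_xy_yz_iff_graphMisses (hxy : x < y) (hyz : y < z) (hzx : z < x + n) :
    AllowedChain n f x y y z ↔
      (z ≤ f x ∧ f x < f y ∧ f x < f z ∧ f y ≤ x + n ∧ f z ≤ y + n) ∧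
        GraphMisses f x y (f x) (f y) ∧ GraphMisses f y z (f x) (f z) := by
  obtain ⟨hxy', hxz', hyz'⟩ := pairwise_not_modEq_of_lt hxy hyz hzx
  have hmiss : GraphMisses (f ∘ affT n x y) y z (f x) (f z) ↔ GraphMisses f y z (f x) (f z) :=
    graphMisses_comp_affT_iff (x := x) ⟨by omega, by omega⟩ ⟨by omega, by omega⟩ (by omega)
      (by omega) (by simp; omega) (by simp)
  simp only [AllowedChain, allowedBT_iff, Function.comp_apply, affT_right hxy',
    affT_of_not_modEq (Int.modEq_comm.not.1 hxz') (Int.modEq_comm.not.1 hyz'), hmiss]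
  grind

theorem allowedChain_yz_xz_iff (hf : f.Injective) (hxy : x < y) (hyz : y < z) (hzx : z < x + n) :
    AllowedChain n f y z x z ↔ AllowedChain n f x y y z ∧ f y < f z := by
  obtain ⟨hxy', hxz', hyz'⟩ := pairwise_not_modEq_of_lt hxy hyz hzx
  have hsplit : GraphMisses (f ∘ affT n y z) x z (f x) (f y) ↔
      GraphMisses f x y (f x) (f y) ∧ GraphMisses f y z (f x) (f y) ∧
        f z ∉ Set.Ioo (f x) (f y) := by
    rw [graphMisses_split_left hxy hyz,
      graphMisses_comp_affT_iff (x := x) ⟨by omega, by omega⟩ ⟨by omega, by omega⟩ (by omega)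
        (by omega) (by simp) (by simp; omega),
      graphMisses_comp_affT_iff (x := x) ⟨by omega, by omega⟩ ⟨by omega, by omega⟩ (by omega)
        (by omega) (by simp) (by simp), Function.comp_apply, affT_left]
  have hglue (hu : f x < f y) (hv : f y < f z) : GraphMisses f y z (f x) (f z) ↔
      GraphMisses f y z (f x) (f y) ∧ GraphMisses f y z (f y) (f z) :=
    graphMisses_split_right hf (by simp) hu hv
  rw [allowedChain_xy_yz_iff_graphMisses hxy hyz hzx]
  simp only [AllowedChain, allowedBT_iff, Function.comp_apply, affT_right hyz',
    affT_of_not_modEq hxy' hxz', hsplit]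
  grind

theorem allowedChain_xz_xy_iff (hf : f.Injective) (hxy : x < y) (hyz : y < z) (hzx : z < x + n) :
    AllowedChain n f x z x y ↔ AllowedChain n f x y y z ∧ f z < f y := by
  obtain ⟨hxy', -, hyz'⟩ := pairwise_not_modEq_of_lt hxy hyz hzx
  have hmiss : GraphMisses (f ∘ affT n x z) x y (f z) (f y) ↔ GraphMisses f x y (f z) (f y) :=
    graphMisses_comp_affT_iff (x := x) ⟨by omega, by omega⟩ ⟨by omega, by omega⟩ (by omega)
      (by omega) (by simp) (by simp; omega)
  have hglue (hu : f x < f z) (hv : f z < f y) : GraphMisses f x y (f x) (f y) ↔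
      GraphMisses f x y (f x) (f z) ∧ GraphMisses f x y (f z) (f y) :=
    graphMisses_split_right hf (by simp; omega) hu hv
  rw [allowedChain_xy_yz_iff_graphMisses hxy hyz hzx]
  simp only [AllowedChain, allowedBT_iff, Function.comp_apply, affT_left,
    affT_of_not_modEq (Int.modEq_comm.not.1 hxy') hyz', hmiss, graphMisses_split_left hxy hyz]
  grind

/-! ### Intermediate maps -/

/-- The covering relation given by boundary transpositions: `g` arises from `f` by a single allowed
boundary transposition. -/
def BoundaryStep (n : ℤ) (f g : ℤ → ℤ) : Prop :=
  ∃ a b, AllowedBT n f a b ∧ g = f ∘ affT n a b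

/-- The middle terms of the chains of two boundary steps from `f` to `h`. -/
def intermediates (n : ℤ) (f h : ℤ → ℤ) : Set (ℤ → ℤ) :=
  {g | BoundaryStep n f g ∧ BoundaryStep n g h}

theorem AllowedBT.boundaryStep (h : AllowedBT n f a b) : BoundaryStep n f (f ∘ affT n a b) :=
  ⟨a, b, h, rfl⟩

theorem boundaryStep_comp_affT_iff (hf : IsAffinePerm n f) (hab : a < b) :
    BoundaryStep n f (f ∘ affT n a b) ↔ AllowedBT n f a b := by
  refine ⟨fun ⟨c, d, hcd, heq⟩ ↦ ?_, AllowedBT.boundaryStep⟩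
  have hT : affT n a b = affT n c d := hf.injective.comp_left heq
  have hac : a ≡ c [ZMOD n] := modEq_of_lt_affT hcd.left_lt_right (by rwa [← hT, affT_left])
  obtain ⟨j, -, haj, hTj⟩ := hcd.exists_of_modEq_left hf hac
  have hjb : j = b := by rw [← affT_left n a j, hTj, ← hT, affT_left]
  exact hjb ▸ haj

theorem comp_affT_mem_intermediates_iff (hf : IsAffinePerm n f) (hab : a < b) (hcd : c < d) :
    f ∘ affT n a b ∈ intermediates n f ((f ∘ affT n a b) ∘ affT n c d) ↔
      AllowedChain n f a b c d := by
  simp only [intermediates, Set.mem_ofPred_eq, boundaryStep_comp_affT_iff hf hab]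
  exact and_congr_right fun h ↦ boundaryStep_comp_affT_iff (h.isAffinePerm_comp hf) hcd

namespace BoundaryStep

theorem eq_comp_affT (hfg : BoundaryStep n f g) (hf : f.Injective) (h : g i = f j)
    (hij : ¬ i ≡ j [ZMOD n]) : g = f ∘ affT n i j := by
  obtain ⟨a, b, hab, rfl⟩ := hfg
  rw [affT_eq_affT_of_apply_eq hab.not_modEq (hf h) fun heq ↦ hij (heq ▸ Int.ModEq.rfl)]

theorem exists_apply_eq (hfg : BoundaryStep n f g) (hij : ¬ i ≡ j [ZMOD n])
    (hik : ¬ i ≡ k [ZMOD n]) (hjk : ¬ j ≡ k [ZMOD n]) : f i = g i ∨ f j = g j ∨ f k = g k := by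
  obtain ⟨a, b, -, rfl⟩ := hfg
  have hfix (q : ℤ) : q ≡ a [ZMOD n] ∨ q ≡ b [ZMOD n] ∨ f q = (f ∘ affT n a b) q := by
    by_cases hqa : q ≡ a [ZMOD n]
    · exact .inl hqa
    by_cases hqb : q ≡ b [ZMOD n]
    · exact .inr (.inl hqb)
    rw [Function.comp_apply, affT_of_not_modEq hqa hqb]
    tauto
  have := hfix i
  have := hfix j
  have := hfix k
  grind [Int.ModEq]

end BoundaryStep

/-! ### Three-cycles -/

theorem eq_of_mem_intermediates_threeCycle (hf : f.Injective) (hxy : ¬ x ≡ y [ZMOD n])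
    (hxz : ¬ x ≡ z [ZMOD n]) (hyz : ¬ y ≡ z [ZMOD n])
    (hg : g ∈ intermediates n f ((f ∘ affT n x y) ∘ affT n y z)) :
    g = f ∘ affT n x y ∨ g = f ∘ affT n y z ∨ g = f ∘ affT n x z := by
  obtain ⟨hfg, hgh⟩ := hg
  rcases hgh.exists_apply_eq hxy hxz hyz with hx | hy | hz
  · refine .inl (hfg.eq_comp_affT hf ?_ hxy)
    simpa [affT_of_not_modEq hxy hxz] using hx
  · refine .inr (.inl (hfg.eq_comp_affT hf ?_ hyz))
    simpa [affT_of_not_modEq (Int.modEq_comm.not.1 hxz) (Int.modEq_comm.not.1 hyz)] using hy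
  · refine .inr (.inr ?_)
    rw [affT_comm hxz]
    refine hfg.eq_comp_affT hf ?_ (Int.modEq_comm.not.1 hxz)
    simpa [affT_right hyz, affT_right hxy] using hz

namespace AllowedChain

theorem lt_add_of_xy_yz (h : AllowedChain n f x y y z) : z < x + n := by
  obtain ⟨hxy, -, -, hzy, -⟩ := h
  rw [Function.comp_apply, affT_right hxy.not_modEq] at hzy
  obtain ⟨-, -, -, hlt, hle, -⟩ := hxy
  exact hzy.trans_lt (hlt.trans_le hle)

theorem ncard_intermediates_xy_yz (h : AllowedChain n f x y y z) (hf : IsAffinePerm n f) :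
    (intermediates n f ((f ∘ affT n x y) ∘ affT n y z)).ncard = 2 := by
  have hxy := h.1.left_lt_right
  have hyz := h.2.left_lt_right
  have hzx := h.lt_add_of_xy_yz
  obtain ⟨hxy', hxz', hyz'⟩ := pairwise_not_modEq_of_lt hxy hyz hzx
  have hmem_xy := (comp_affT_mem_intermediates_iff hf hxy hyz).2 h
  have hmem_yz := comp_affT_mem_intermediates_iff hf hyz (hxy.trans hyz)
  have hmem_xz := comp_affT_mem_intermediates_iff hf (hxy.trans hyz) hxy
  rw [Function.comp_assoc, affT_braid_right hxy' hxz' hyz', ← Function.comp_assoc,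
    allowedChain_yz_xz_iff hf.injective hxy hyz hzx] at hmem_yz
  rw [Function.comp_assoc, affT_braid_left hxy' hxz' hyz', ← Function.comp_assoc,
    allowedChain_xz_xy_iff hf.injective hxy hyz hzx] at hmem_xz
  have hsub := fun g ↦ eq_of_mem_intermediates_threeCycle (g := g) hf.injective hxy' hxz' hyz'
  rw [Set.ncard_eq_two]
  rcases lt_or_gt_of_ne (hf.injective.ne hyz.ne) with hlt | hgt
  · refine ⟨f ∘ affT n x y, f ∘ affT n y z, fun heq ↦ hxy.ne' ?_, subset_antisymm (fun g hg ↦ ?_)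
      (Set.pair_subset hmem_xy (hmem_yz.2 ⟨h, hlt⟩))⟩
    · simpa [affT_of_not_modEq hxy' hxz'] using hf.injective (congrFun heq x)
    · rcases hsub g hg with rfl | rfl | rfl
      exacts [.inl rfl, .inr rfl, absurd (hmem_xz.1 hg).2 hlt.not_gt]
  · refine ⟨f ∘ affT n x y, f ∘ affT n x z, fun heq ↦ hyz.ne ?_, subset_antisymm (fun g hg ↦ ?_)
      (Set.pair_subset hmem_xy (hmem_xz.2 ⟨h, hgt⟩))⟩
    · simpa using hf.injective (congrFun heq x)
    · rcases hsub g hg with rfl | rfl | rfl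
      exacts [.inl rfl, absurd (hmem_yz.1 hg).2 hgt.not_gt, .inr rfl]

theorem ncard_intermediates_yz_xz (h : AllowedChain n f y z x z) (hf : IsAffinePerm n f)
    (hxy : x < y) : (intermediates n f ((f ∘ affT n y z) ∘ affT n x z)).ncard = 2 := by
  have hyz := h.1.left_lt_right
  have hzx := h.2.right_lt_add
  obtain ⟨hxy', hxz', hyz'⟩ := pairwise_not_modEq_of_lt hxy hyz hzx
  rw [Function.comp_assoc, affT_braid_right hxy' hxz' hyz']
  exact ((allowedChain_yz_xz_iff hf.injective hxy hyz hzx).1 h).1.ncard_intermediates_xy_yz hf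

theorem ncard_intermediates_xz_xy (h : AllowedChain n f x z x y) (hf : IsAffinePerm n f)
    (hyz : y < z) : (intermediates n f ((f ∘ affT n x z) ∘ affT n x y)).ncard = 2 := by
  have hxy := h.2.left_lt_right
  have hzx := h.1.right_lt_add
  obtain ⟨hxy', hxz', hyz'⟩ := pairwise_not_modEq_of_lt hxy hyz hzx
  rw [Function.comp_assoc, affT_braid_left hxy' hxz' hyz']
  exact ((allowedChain_xz_xy_iff hf.injective hxy hyz hzx).1 h).1.ncard_intermediates_xy_yz hf

end AllowedChain

/-! ### Products of disjoint transpositions -/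

namespace AllowedChain

theorem corners_notMem_of_disjoint (h : AllowedChain n f a b c d) (hf : f.Injective)
    (hac : ¬ a ≡ c [ZMOD n]) (had : ¬ a ≡ d [ZMOD n]) (hbc : ¬ b ≡ c [ZMOD n])
    (hbd : ¬ b ≡ d [ZMOD n]) :
    (a ∈ Set.Ioo c d → f a ∉ Set.Ioo (f c) (f d)) ∧
      (b ∈ Set.Ioo c d → f b ∉ Set.Ioo (f c) (f d)) ∧
      (c ∈ Set.Ioo a b → f d ∉ Set.Ioo (f a) (f b)) ∧
      (d ∈ Set.Ioo a b → f c ∉ Set.Ioo (f a) (f b)) := by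
  have hne {p q : ℤ} (hpq : ¬ p ≡ q [ZMOD n]) : p ≠ q ∧ f p ≠ f q := by
    have : p ≠ q := fun heq ↦ hpq (heq ▸ Int.ModEq.rfl)
    exact ⟨this, hf.ne this⟩
  obtain ⟨hab, hcd⟩ := h
  have hc := hab.not_between (q := c)
  have hd := hab.not_between (q := d)
  have ha := hcd.not_between (q := a)
  have hb := hcd.not_between (q := b)
  have hlt := hcd.apply_lt_apply
  simp only [Function.comp_apply, affT_left, affT_right hab.not_modEq,
    affT_of_not_modEq (Int.modEq_comm.not.1 hac) (Int.modEq_comm.not.1 hbc),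
    affT_of_not_modEq (Int.modEq_comm.not.1 had) (Int.modEq_comm.not.1 hbd)] at ha hb hlt
  have := hab.left_lt_right
  have := hcd.left_lt_right
  have := hab.apply_lt_apply
  have := hne hac
  have := hne had
  have := hne hbc
  have := hne hbd
  -- A corner of one rectangle inside the other forces a forbidden corner the other way round.
  simp only [Set.mem_Ioo]
  omega

theorem allowedBT_of_disjoint (h : AllowedChain n f a b c d) (hf : IsAffinePerm n f)
    (hac : ¬ a ≡ c [ZMOD n]) (had : ¬ a ≡ d [ZMOD n]) (hbc : ¬ b ≡ c [ZMOD n])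
    (hbd : ¬ b ≡ d [ZMOD n]) : AllowedBT n f c d := by
  obtain ⟨hcd, hdc, hdf, hlt, hfc, hmiss⟩ := h.2
  simp only [Function.comp_apply, affT_of_not_modEq (Int.modEq_comm.not.1 hac)
    (Int.modEq_comm.not.1 hbc), affT_of_not_modEq (Int.modEq_comm.not.1 had)
    (Int.modEq_comm.not.1 hbd)] at hdf hlt hfc hmiss
  refine ⟨hcd, hdc, hdf, hlt, hfc, fun ⟨q, hcq, hqd, hq, hq'⟩ ↦ ?_⟩
  by_cases hqa : q ≡ a [ZMOD n]
  · obtain ⟨j, hjb, hqj, hT⟩ := h.1.exists_of_modEq_left hf hqa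
    have hchain : AllowedChain n f q j c d := ⟨hqj, hT ▸ h.2⟩
    exact (hchain.corners_notMem_of_disjoint hf.injective (fun h ↦ hac (hqa.symm.trans h))
      (fun h ↦ had (hqa.symm.trans h)) (fun h ↦ hbc (hjb.symm.trans h))
      (fun h ↦ hbd (hjb.symm.trans h))).1 ⟨hcq, hqd⟩ ⟨hq, hq'⟩
  by_cases hqb : q ≡ b [ZMOD n]
  · obtain ⟨i, hia, hiq, hT⟩ := h.1.exists_of_modEq_right hf hqb
    have hchain : AllowedChain n f i q c d := ⟨hiq, hT ▸ h.2⟩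
    exact (hchain.corners_notMem_of_disjoint hf.injective (fun h ↦ hac (hia.symm.trans h))
      (fun h ↦ had (hia.symm.trans h)) (fun h ↦ hbc (hqb.symm.trans h))
      (fun h ↦ hbd (hqb.symm.trans h))).2.1 ⟨hcq, hqd⟩ ⟨hq, hq'⟩
  · rw [← affT_of_not_modEq hqa hqb] at hq hq'
    exact hmiss ⟨q, hcq, hqd, hq, hq'⟩

theorem swap_of_disjoint (h : AllowedChain n f a b c d) (hf : IsAffinePerm n f)
    (hac : ¬ a ≡ c [ZMOD n]) (had : ¬ a ≡ d [ZMOD n]) (hbc : ¬ b ≡ c [ZMOD n])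
    (hbd : ¬ b ≡ d [ZMOD n]) : AllowedChain n f c d a b := by
  refine ⟨h.allowedBT_of_disjoint hf hac had hbc hbd, ?_⟩
  have hg := h.1.isAffinePerm_comp hf
  obtain ⟨hab, hba, hbf, hlt, hfa, hmiss⟩ := h.1
  simp only [AllowedBT, Function.comp_apply, affT_of_not_modEq hac had, affT_of_not_modEq hbc hbd]
  refine ⟨hab, hba, hbf, hlt, hfa, fun ⟨q, haq, hqb, hq, hq'⟩ ↦ ?_⟩
  by_cases hqc : q ≡ c [ZMOD n]
  · obtain ⟨j, hjd, hqj, hT⟩ := h.2.exists_of_modEq_left hg hqc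
    have hchain : AllowedChain n f a b q j := ⟨h.1, hqj⟩
    rw [← hT, affT_left] at hq hq'
    exact (hchain.corners_notMem_of_disjoint hf.injective (fun h ↦ hac (h.trans hqc))
      (fun h ↦ had (h.trans hjd)) (fun h ↦ hbc (h.trans hqc))
      (fun h ↦ hbd (h.trans hjd))).2.2.1 ⟨haq, hqb⟩ ⟨hq, hq'⟩
  by_cases hqd : q ≡ d [ZMOD n]
  · obtain ⟨i, hic, hiq, hT⟩ := h.2.exists_of_modEq_right hg hqd
    have hchain : AllowedChain n f a b i q := ⟨h.1, hiq⟩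
    rw [← hT, affT_right hiq.not_modEq] at hq hq'
    exact (hchain.corners_notMem_of_disjoint hf.injective (fun h ↦ hac (h.trans hic))
      (fun h ↦ had (h.trans hqd)) (fun h ↦ hbc (h.trans hic))
      (fun h ↦ hbd (h.trans hqd))).2.2.2 ⟨haq, hqb⟩ ⟨hq, hq'⟩
  · rw [affT_of_not_modEq hqc hqd] at hq hq'
    exact hmiss ⟨q, haq, hqb, hq, hq'⟩

end AllowedChain

theorem eq_of_mem_intermediates_disjoint (hf : f.Injective) (hac : ¬ a ≡ c [ZMOD n])
    (had : ¬ a ≡ d [ZMOD n]) (hbc : ¬ b ≡ c [ZMOD n]) (hbd : ¬ b ≡ d [ZMOD n])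
    (hab : ¬ a ≡ b [ZMOD n]) (hcd : ¬ c ≡ d [ZMOD n])
    (hg : g ∈ intermediates n f ((f ∘ affT n a b) ∘ affT n c d)) :
    g = f ∘ affT n a b ∨ g = f ∘ affT n c d := by
  obtain ⟨hfg, hgh⟩ := hg
  rcases hgh.exists_apply_eq hab hac hbc with ha | hb | hc
  · refine .inl (hfg.eq_comp_affT hf ?_ hab)
    simpa [affT_of_not_modEq hac had] using ha
  · rw [affT_comm hab]
    refine .inl (hfg.eq_comp_affT hf ?_ (Int.modEq_comm.not.1 hab))
    simpa [affT_of_not_modEq hbc hbd, affT_right hab] using hb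
  · refine .inr (hfg.eq_comp_affT hf ?_ hcd)
    simpa [affT_of_not_modEq (Int.modEq_comm.not.1 had) (Int.modEq_comm.not.1 hbd)] using hc

theorem ncard_intermediates_disjoint (hf : IsAffinePerm n f) (h : AllowedChain n f a b c d)
    (hac : ¬ a ≡ c [ZMOD n]) (had : ¬ a ≡ d [ZMOD n]) (hbc : ¬ b ≡ c [ZMOD n])
    (hbd : ¬ b ≡ d [ZMOD n]) :
    (intermediates n f ((f ∘ affT n a b) ∘ affT n c d)).ncard = 2 := by
  have hab := h.1.not_modEq
  have hcd := h.2.not_modEq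
  have hmem_ab := (comp_affT_mem_intermediates_iff hf h.1.left_lt_right h.2.left_lt_right).2 h
  have hmem_cd := (comp_affT_mem_intermediates_iff hf h.2.left_lt_right h.1.left_lt_right).2
    (h.swap_of_disjoint hf hac had hbc hbd)
  rw [Function.comp_assoc, affT_comp_affT_comm hac had hbc hbd hcd, ← Function.comp_assoc]
    at hmem_cd
  refine Set.ncard_eq_two.2 ⟨_, _, fun heq ↦ h.1.left_lt_right.ne' ?_,
    subset_antisymm (fun g ↦ ?_) (Set.pair_subset hmem_ab hmem_cd)⟩
  · simpa [affT_of_not_modEq hac had] using hf.injective (congrFun heq a)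
  · exact eq_of_mem_intermediates_disjoint hf.injective hac had hbc hbd hab hcd

/-! ### Reflection -/

/-- The map whose graph is the image of the graph of `f` under `(i, j) ↦ (-i, n - j)`. The shift by
`n` makes the two bounds `b ≤ f a` and `f b ≤ a + n` on a boundary transposition trade places. -/
def reflection (n : ℤ) (f : ℤ → ℤ) (i : ℤ) : ℤ :=
  n - f (-i)

theorem reflection_involutive (n : ℤ) : Function.Involutive (reflection n) := fun f ↦ by
  funext i
  simp [reflection]

theorem IsAffinePerm.reflect (hf : IsAffinePerm n f) : IsAffinePerm n (reflection n f) := by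
  refine ⟨fun i j hij ↦ neg_injective (hf.injective (sub_right_injective hij)), fun i ↦ ?_⟩
  have := hf.map_add_period (-(i + n))
  rw [show -(i + n) + n = -i by ring] at this
  simp only [reflection]
  omega

theorem reflection_comp_affT (hab : ¬ a ≡ b [ZMOD n]) :
    reflection n (f ∘ affT n a b) = reflection n f ∘ affT n (-b) (-a) := by
  have hneg (i : ℤ) : affT n a b (-i) = -affT n (-b) (-a) i := by
    have hiff (c : ℤ) : i ≡ -c [ZMOD n] ↔ -i ≡ c [ZMOD n] := by
      rw [← Int.neg_modEq_neg, neg_neg]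
    simp only [affT_apply, hiff]
    grind [Int.ModEq]
  funext i
  simp only [reflection, Function.comp_apply, hneg]

theorem AllowedBT.reflect (h : AllowedBT n f a b) : AllowedBT n (reflection n f) (-b) (-a) := by
  obtain ⟨hab, hba, hbf, hlt, hfa, hmiss⟩ := h
  simp only [AllowedBT, reflection, neg_neg]
  refine ⟨by omega, by omega, by omega, by omega, by omega, ?_⟩
  rintro ⟨q, hbq, hqa, hq, hq'⟩
  exact hmiss ⟨-q, by omega, by omega, by omega, by omega⟩

theorem BoundaryStep.reflect (h : BoundaryStep n f g) :
    BoundaryStep n (reflection n f) (reflection n g) := by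
  obtain ⟨a, b, hab, rfl⟩ := h
  exact ⟨-b, -a, hab.reflect, reflection_comp_affT hab.not_modEq⟩

theorem AllowedChain.reflect (h : AllowedChain n f a b c d) :
    AllowedChain n (reflection n f) (-b) (-a) (-d) (-c) :=
  ⟨h.1.reflect, reflection_comp_affT h.1.not_modEq ▸ h.2.reflect⟩

theorem intermediates_reflection (n : ℤ) (f h : ℤ → ℤ) :
    intermediates n (reflection n f) (reflection n h) = reflection n '' intermediates n f h := by
  have hsub (f h : ℤ → ℤ) :
      Set.MapsTo (reflection n) (intermediates n f h)
        (intermediates n (reflection n f) (reflection n h)) :=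
    fun g hg ↦ ⟨hg.1.reflect, hg.2.reflect⟩
  refine subset_antisymm (fun g hg ↦ ⟨reflection n g, ?_, reflection_involutive n g⟩)
    (hsub f h).image_subset
  simpa only [reflection_involutive n _] using hsub _ _ hg

theorem ncard_intermediates_reflection (h : AllowedChain n f a b c d) :
    (intermediates n (reflection n f)
      ((reflection n f ∘ affT n (-b) (-a)) ∘ affT n (-d) (-c))).ncard =
      (intermediates n f ((f ∘ affT n a b) ∘ affT n c d)).ncard := by
  rw [← reflection_comp_affT h.1.not_modEq, ← reflection_comp_affT h.2.not_modEq,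
    intermediates_reflection, Set.ncard_image_of_injective _ (reflection_involutive n).injective]

/-! ### Counting intermediate maps -/

namespace AllowedChain

theorem ncard_intermediates_left_eq_right (h : AllowedChain n f a b c a) (hf : IsAffinePerm n f) :
    (intermediates n f ((f ∘ affT n a b) ∘ affT n c a)).ncard = 2 := by
  rw [← ncard_intermediates_reflection h]
  exact h.reflect.ncard_intermediates_xy_yz hf.reflect

theorem ncard_intermediates_left_eq_left (h : AllowedChain n f a b a d) (hf : IsAffinePerm n f) :
    (intermediates n f ((f ∘ affT n a b) ∘ affT n a d)).ncard = 2 := by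
  rcases lt_trichotomy d b with hdb | rfl | hbd
  · exact h.ncard_intermediates_xz_xy hf hdb
  · have hlt := h.2.apply_lt_apply
    rw [Function.comp_apply, Function.comp_apply, affT_left, affT_right h.1.not_modEq] at hlt
    exact absurd h.1.apply_lt_apply hlt.not_gt
  · rw [← ncard_intermediates_reflection h]
    exact h.reflect.ncard_intermediates_yz_xz hf.reflect (neg_lt_neg hbd)

theorem ncard_intermediates_right_eq_right (h : AllowedChain n f a b c b)
    (hf : IsAffinePerm n f) :
    (intermediates n f ((f ∘ affT n a b) ∘ affT n c b)).ncard = 2 := by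
  rw [← ncard_intermediates_reflection h]
  exact h.reflect.ncard_intermediates_left_eq_left hf.reflect

theorem ncard_intermediates (h : AllowedChain n f a b c d) (hf : IsAffinePerm n f) :
    (intermediates n f ((f ∘ affT n a b) ∘ affT n c d)).ncard = 2 := by
  have hg := h.1.isAffinePerm_comp hf
  by_cases hac : a ≡ c [ZMOD n]
  · obtain ⟨j, -, haj, hT⟩ := h.2.exists_of_modEq_left hg hac
    exact hT ▸ ncard_intermediates_left_eq_left ⟨h.1, haj⟩ hf
  by_cases hbc : b ≡ c [ZMOD n]
  · obtain ⟨j, -, hbj, hT⟩ := h.2.exists_of_modEq_left hg hbc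
    exact hT ▸ ncard_intermediates_xy_yz ⟨h.1, hbj⟩ hf
  by_cases had : a ≡ d [ZMOD n]
  · obtain ⟨i, -, hia, hT⟩ := h.2.exists_of_modEq_right hg had
    exact hT ▸ ncard_intermediates_left_eq_right ⟨h.1, hia⟩ hf
  by_cases hbd : b ≡ d [ZMOD n]
  · obtain ⟨i, -, hib, hT⟩ := h.2.exists_of_modEq_right hg hbd
    exact hT ▸ ncard_intermediates_right_eq_right ⟨h.1, hib⟩ hf
  exact ncard_intermediates_disjoint hf h hac had hbc hbd

end AllowedChain

/-! ### Normalized chains -/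

/-- One representative `(a, b)` of each class of pairs defining the same affine transposition,
chosen by `1 ≤ a ≤ n`. -/
def normalizedPairs (n : ℤ) : Set (ℤ × ℤ) :=
  {p | 1 ≤ p.1 ∧ p.1 ≤ n ∧ p.1 < p.2 ∧ p.2 < p.1 + n}

theorem affT_injOn_normalizedPairs :
    Set.InjOn (fun p : ℤ × ℤ ↦ affT n p.1 p.2) (normalizedPairs n) := by
  rintro ⟨a, b⟩ ⟨ha, han, hab, -⟩ ⟨c, d⟩ ⟨hc, hcn, hcd, -⟩ (hT : affT n a b = affT n c d)
  have hmod : a ≡ c [ZMOD n] := modEq_of_lt_affT hcd (by rwa [← hT, affT_left])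
  obtain rfl : a = c := by
    by_contra hne
    exact not_modEq_of_ne_of_mem_Ico (x := 1) ⟨ha, by omega⟩ ⟨hc, by omega⟩ hne hmod
  rw [← affT_left n a b, hT, affT_left]

theorem BoundaryStep.exists_mem_normalizedPairs (hfg : BoundaryStep n f g) (hn : 0 < n)
    (hf : IsAffinePerm n f) :
    ∃ p ∈ normalizedPairs n, AllowedBT n f p.1 p.2 ∧ f ∘ affT n p.1 p.2 = g := by
  obtain ⟨a, b, hab, rfl⟩ := hfg
  have hmod : (a - 1) % n + 1 ≡ a [ZMOD n] := by
    simpa using (Int.mod_modEq (a - 1) n).add_right 1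
  obtain ⟨j, -, hij, hT⟩ := hab.exists_of_modEq_left hf hmod
  have := Int.emod_nonneg (a - 1) hn.ne'
  have := Int.emod_lt_of_pos (a - 1) hn
  exact ⟨(_, j), ⟨by omega, by omega, hij.left_lt_right, hij.right_lt_add⟩, hij, by rw [hT]⟩

/-- The chains of two boundary transpositions from `f` to `h`, each recorded by its normalized
pairs. -/
def boundaryChains (n : ℤ) (f h : ℤ → ℤ) : Set ((ℤ × ℤ) × (ℤ × ℤ)) :=
  {p | p.1 ∈ normalizedPairs n ∧ p.2 ∈ normalizedPairs n ∧
    AllowedChain n f p.1.1 p.1.2 p.2.1 p.2.2 ∧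
    (f ∘ affT n p.1.1 p.1.2) ∘ affT n p.2.1 p.2.2 = h}

theorem injOn_boundaryChains (hf : IsAffinePerm n f) :
    Set.InjOn (fun p : (ℤ × ℤ) × (ℤ × ℤ) ↦ f ∘ affT n p.1.1 p.1.2) (boundaryChains n f h) := by
  rintro ⟨p, q⟩ ⟨hp, hq, hchain, hh⟩ ⟨p', q'⟩ ⟨hp', hq', -, hh'⟩ heq
  obtain rfl := affT_injOn_normalizedPairs hp hp' (hf.injective.comp_left heq)
  have hg := hchain.1.isAffinePerm_comp hf
  obtain rfl := affT_injOn_normalizedPairs hq hq' (hg.injective.comp_left (hh.trans hh'.symm))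
  rfl

theorem image_boundaryChains (hn : 0 < n) (hf : IsAffinePerm n f) :
    (fun p : (ℤ × ℤ) × (ℤ × ℤ) ↦ f ∘ affT n p.1.1 p.1.2) '' boundaryChains n f h =
      intermediates n f h := by
  ext g
  constructor
  · rintro ⟨p, ⟨-, -, hchain, rfl⟩, rfl⟩
    exact ⟨hchain.1.boundaryStep, hchain.2.boundaryStep⟩
  · rintro ⟨hfg, hgh⟩
    obtain ⟨p, hp, hab, rfl⟩ := hfg.exists_mem_normalizedPairs hn hf
    obtain ⟨q, hq, hcd, rfl⟩ := hgh.exists_mem_normalizedPairs hn (hab.isAffinePerm_comp hf)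
    exact ⟨(p, q), ⟨hp, hq, ⟨hab, hcd⟩, rfl⟩, rfl⟩

end

theorem codim_two_boundaries_in_pairs_general (n : ℤ) (hn : 0 < n) (σ : ℤ → ℤ)
    (hσ : IsAffinePerm n σ) (ρ : ℤ → ℤ) :
    (boundaryChains n σ ρ).ncard = 0 ∨ (boundaryChains n σ ρ).ncard = 2 := by
  rcases (boundaryChains n σ ρ).eq_empty_or_nonempty with hempty | ⟨p, -, -, hchain, rfl⟩
  · exact .inl (by rw [hempty, Set.ncard_empty])
  · right
    rw [← (injOn_boundaryChains hσ).ncard_image, image_boundaryChains hn hσ,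
      hchain.ncard_intermediates hσ]

/-- Every codimension-2 boundary of a positroid cell is reached by
either zero or exactly two chains of two allowed boundary transpositions
(normalized so that `1 ≤ a ≤ n` and `1 ≤ c ≤ n`). -/
theorem codim_two_boundaries_in_pairs (n : ℤ) (hn : 0 < n) (σ : ℤ → ℤ)
    (hσ : IsDecoratedPerm n σ) (ρ : ℤ → ℤ) :
    ({p : (ℤ × ℤ) × (ℤ × ℤ) |
        1 ≤ p.1.1 ∧ p.1.1 ≤ n ∧ p.1.1 < p.1.2 ∧ p.1.2 < p.1.1 + n ∧
        1 ≤ p.2.1 ∧ p.2.1 ≤ n ∧ p.2.1 < p.2.2 ∧ p.2.2 < p.2.1 + n ∧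
        AllowedBT n σ p.1.1 p.1.2 ∧
        AllowedBT n (σ ∘ affT n p.1.1 p.1.2) p.2.1 p.2.2 ∧
        (σ ∘ affT n p.1.1 p.1.2) ∘ affT n p.2.1 p.2.2 = ρ}).ncard = 0 ∨
    ({p : (ℤ × ℤ) × (ℤ × ℤ) |
        1 ≤ p.1.1 ∧ p.1.1 ≤ n ∧ p.1.1 < p.1.2 ∧ p.1.2 < p.1.1 + n ∧
        1 ≤ p.2.1 ∧ p.2.1 ≤ n ∧ p.2.1 < p.2.2 ∧ p.2.2 < p.2.1 + n ∧
        AllowedBT n σ p.1.1 p.1.2 ∧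
        AllowedBT n (σ ∘ affT n p.1.1 p.1.2) p.2.1 p.2.2 ∧
        (σ ∘ affT n p.1.1 p.1.2) ∘ affT n p.2.1 p.2.2 = ρ}).ncard = 2 := by
  simpa only [boundaryChains, normalizedPairs, AllowedChain, Set.mem_ofPred_eq, and_assoc]
    using codim_two_boundaries_in_pairs_general n hn σ hσ.isAffinePerm ρ
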